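/- Let ((f_n),(τ_n)) and ((g_n),(ω_n)) be two p-ASFs for the Banach space X, and set P_{f,τ} := θ_f S_{f,τ}^{-1} θ_τ and P_{g,ω} := θ_g S_{g,ω}^{-1} θ_ω (bounded operators on ℓ^p(ℕ)). Then the following are equivalent: (i) there exist bounded invertible operators T₁, T₂ : X → X with g_n = f_n ∘ T₁ and ω_n = T₂ τ_n for all n; (ii) there exist bounded invertible operators T₁, T₂ : X → X with θ_g = θ_f ∘ T₁ and θ_ω = T₂ ∘ θ_τ; (iii) P_{g,ω} = P_{f,τ}. If these hold, the invertible operators in (i) and (ii) are unique and given by T₁ = S_{f,τ}^{-1} θ_τ θ_g and T₂ = θ_ω θ_f S_{f,τ}^{-1}. Moreover, if S_{f,τ} = I_X, then S_{g,ω} = I_X if and only if T₂ T₁ = I_X, if and only if T₁ T₂ = I_X. -/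

import Mathlib

open Filter
open scoped ENNReal

variable {𝕂 : Type*} [RCLike 𝕂] {X : Type*} [NormedAddCommGroup X] [NormedSpace 𝕂 X]
  [CompleteSpace X]

/-!
Write `S = σ θ` and `P = θ S⁻¹ σ` for one frame, `S' = σ' θ'` and `P' = θ' S'⁻¹ σ'` for the other.
Similarity turns `S` into `S' = T₂ S T₁`, and `T₁`, `T₂` cancel in `P'`. Conversely `P θ = θ`
and `σ P = σ`, so `P = P'` makes `T₁ = S⁻¹ σ θ'` and `S'⁻¹ σ' θ` inverse to each other with
`θ T₁ = P θ' = θ'`; the relation `S' = T₂ S T₁` then leaves only `T₂ = S' T₁⁻¹ S⁻¹`.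
Frame elements and operators determine each other because `τ n` is the image of the `n`-th unit
vector, while the expansion of the synthesis operator recovers it from the `τ n`.
-/

section FrameOperator

variable {R V W E : Type*} [Semiring R]
  [AddCommMonoid V] [Module R V] [TopologicalSpace V]
  [AddCommMonoid W] [Module R W] [TopologicalSpace W]
  [AddCommMonoid E] [Module R E] [TopologicalSpace E]
  {θ : V →L[R] E} {σ : E →L[R] V} {S : V ≃L[R] V}
  {θ' : W →L[R] E} {σ' : E →L[R] W} {S' : W ≃L[R] W}

/-- The operator `P = θ S⁻¹ σ` of a frame with analysis operator `θ`, synthesis operator `σ` and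
frame operator `S`. It is idempotent when `S = σ θ`, which the definition does not demand. -/
def frameProjection (θ : V →L[R] E) (σ : E →L[R] V) (S : V ≃L[R] V) : E →L[R] E :=
  θ.comp ((S.symm : V →L[R] V).comp σ)

theorem frameProjection_comp_analysis (hS : (S : V →L[R] V) = σ.comp θ) :
    (frameProjection θ σ S).comp θ = θ := by
  rw [frameProjection, ContinuousLinearMap.comp_assoc, ContinuousLinearMap.comp_assoc, ← hS,
    ContinuousLinearEquiv.coe_symm_comp_coe, ContinuousLinearMap.comp_id]

theorem synthesis_comp_frameProjection (hS : (S : V →L[R] V) = σ.comp θ) :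
    σ.comp (frameProjection θ σ S) = σ := by
  rw [frameProjection, ← ContinuousLinearMap.comp_assoc, ← hS, ← ContinuousLinearMap.comp_assoc,
    ContinuousLinearEquiv.coe_comp_coe_symm, ContinuousLinearMap.id_comp]

theorem eq_symm_comp_of_analysis_eq_comp (hS : (S : V →L[R] V) = σ.comp θ) {T : W →L[R] V}
    (hT : θ' = θ.comp T) : T = (S.symm : V →L[R] V).comp (σ.comp θ') := by
  rw [ContinuousLinearEquiv.eq_toContinuousLinearMap_symm_comp, hS, hT,
    ContinuousLinearMap.comp_assoc]

theorem eq_comp_symm_of_synthesis_eq_comp (hS : (S : V →L[R] V) = σ.comp θ) {T : V →L[R] W}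
    (hT : σ' = T.comp σ) : T = (σ'.comp θ).comp (S.symm : V →L[R] V) := by
  rw [ContinuousLinearEquiv.eq_comp_toContinuousLinearMap_symm, hS, hT,
    ContinuousLinearMap.comp_assoc]

theorem frameOperator_eq_comp (hS : (S : V →L[R] V) = σ.comp θ)
    (hS' : (S' : W →L[R] W) = σ'.comp θ') {T₁ : W →L[R] V} {T₂ : V →L[R] W}
    (hT₁ : θ' = θ.comp T₁) (hT₂ : σ' = T₂.comp σ) :
    (S' : W →L[R] W) = T₂.comp ((S : V →L[R] V).comp T₁) := by
  rw [hS', hS, hT₁, hT₂]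
  rfl

theorem frameProjection_eq_of_eq_comp (hS : (S : V →L[R] V) = σ.comp θ)
    (hS' : (S' : W →L[R] W) = σ'.comp θ') {T₁ : W ≃L[R] V} {T₂ : V ≃L[R] W}
    (hT₁ : θ' = θ.comp (T₁ : W →L[R] V)) (hT₂ : σ' = (T₂ : V →L[R] W).comp σ) :
    frameProjection θ' σ' S' = frameProjection θ σ S := by
  have hS'_apply (w : W) : S' w = T₂ (S (T₁ w)) :=
    DFunLike.congr_fun (frameOperator_eq_comp hS hS' hT₁ hT₂) w
  have hsymm (a : E) : S'.symm (σ' a) = T₁.symm (S.symm (σ a)) := by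
    simp [ContinuousLinearEquiv.symm_apply_eq, hS'_apply, hT₂]
  ext a
  simp [frameProjection, hsymm, hT₁]

theorem leftInverse_of_frameProjection_eq (hS : (S : V →L[R] V) = σ.comp θ)
    (hP : frameProjection θ' σ' S' = frameProjection θ σ S) :
    Function.LeftInverse ((S.symm : V →L[R] V).comp (σ.comp θ'))
      ((S'.symm : W →L[R] W).comp (σ'.comp θ)) := fun v ↦
  calc S.symm (σ (frameProjection θ' σ' S' (θ v)))
      = S.symm (σ (frameProjection θ σ S (θ v))) := by rw [hP]
    _ = S.symm (σ (θ v)) :=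
        congrArg (fun A : V →L[R] E ↦ S.symm (σ (A v))) (frameProjection_comp_analysis hS)
    _ = v := S.symm_apply_eq.mpr (DFunLike.congr_fun hS v).symm

theorem exists_eq_comp_of_frameProjection_eq (hS : (S : V →L[R] V) = σ.comp θ)
    (hS' : (S' : W →L[R] W) = σ'.comp θ')
    (hP : frameProjection θ' σ' S' = frameProjection θ σ S) :
    ∃ (T₁ : W ≃L[R] V) (T₂ : V ≃L[R] W),
      θ' = θ.comp (T₁ : W →L[R] V) ∧ σ' = (T₂ : V →L[R] W).comp σ := by
  let T₁ : W ≃L[R] V := .equivOfInverse ((S.symm : V →L[R] V).comp (σ.comp θ'))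
    ((S'.symm : W →L[R] W).comp (σ'.comp θ))
    (leftInverse_of_frameProjection_eq hS' hP.symm) (leftInverse_of_frameProjection_eq hS hP)
  let T₂ : V ≃L[R] W := (S.symm.trans T₁.symm).trans S'
  refine ⟨T₁, T₂, ?_, ?_⟩
  · calc θ' = (frameProjection θ' σ' S').comp θ' := (frameProjection_comp_analysis hS').symm
      _ = (frameProjection θ σ S).comp θ' := by rw [hP]
      _ = θ.comp (T₁ : W →L[R] V) := rfl
  · ext a
    calc σ' a = σ' (frameProjection θ' σ' S' a) :=
          (DFunLike.congr_fun (synthesis_comp_frameProjection hS') a).symm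
      _ = σ' (frameProjection θ σ S a) := by rw [hP]
      _ = S' (S'.symm (σ' (θ (S.symm (σ a))))) := (S'.apply_symm_apply _).symm
      _ = T₂ (σ a) := rfl

theorem exists_eq_comp_iff_frameProjection_eq (hS : (S : V →L[R] V) = σ.comp θ)
    (hS' : (S' : W →L[R] W) = σ'.comp θ') :
    (∃ (T₁ : W ≃L[R] V) (T₂ : V ≃L[R] W),
        θ' = θ.comp (T₁ : W →L[R] V) ∧ σ' = (T₂ : V →L[R] W).comp σ) ↔
      frameProjection θ' σ' S' = frameProjection θ σ S :=
  ⟨fun ⟨_, _, hT₁, hT₂⟩ ↦ frameProjection_eq_of_eq_comp hS hS' hT₁ hT₂,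
    exists_eq_comp_of_frameProjection_eq hS hS'⟩

theorem comp_eq_id_iff_comp_eq_id (T₁ : W ≃L[R] V) (T₂ : V →L[R] W) :
    T₂.comp (T₁ : W →L[R] V) = .id R W ↔ (T₁ : W →L[R] V).comp T₂ = .id R V := by
  rw [← ContinuousLinearEquiv.eq_comp_toContinuousLinearMap_symm, ContinuousLinearMap.id_comp,
    ← ContinuousLinearEquiv.eq_toContinuousLinearMap_symm_comp, ContinuousLinearMap.comp_id]

end FrameOperator

section Coefficients

variable {R V W : Type*} [NormedRing R]
  [AddCommMonoid V] [Module R V] [TopologicalSpace V]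
  [AddCommMonoid W] [Module R W] [TopologicalSpace W]
  {p : ℝ≥0∞} [Fact (1 ≤ p)]

/-- `θ` is the analysis operator `x ↦ (f i x)ᵢ` of the family of functionals `f`, with values
in `ℓ^p`. -/
def IsAnalysisOperator {ι : Type*} (f : ι → V →L[R] R) (θ : V →L[R] lp (fun _ : ι ↦ R) p) : Prop :=
  ∀ x i, θ x i = f i x

/-- `σ` is the synthesis operator `a ↦ ∑ₙ aₙ τₙ` of the sequence `τ`. The series is only required
to converge along initial segments, not unconditionally. -/
def IsSynthesisOperator (τ : ℕ → V) (σ : lp (fun _ : ℕ ↦ R) p →L[R] V) : Prop :=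
  ∀ a : lp (fun _ : ℕ ↦ R) p,
    Tendsto (fun N ↦ ∑ n ∈ Finset.range N, a n • τ n) atTop (nhds (σ a))

/-- `(f, τ)` is a `p`-approximate Schauder frame with analysis operator `θ`, synthesis operator `σ`
and frame operator `S`. For Hausdorff `V` these are determined by `f` and `τ`; taking them as
arguments, with `S` an equivalence, encodes that they exist, are bounded, and that `σ θ` is
invertible. -/
structure IsApproxSchauderFrame (f : ℕ → V →L[R] R) (τ : ℕ → V)
    (θ : V →L[R] lp (fun _ : ℕ ↦ R) p) (σ : lp (fun _ : ℕ ↦ R) p →L[R] V) (S : V ≃L[R] V) :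
    Prop where
  analysis : IsAnalysisOperator f θ
  synthesis : IsSynthesisOperator τ σ
  frameOperator_eq : (S : V →L[R] V) = σ.comp θ

theorem IsAnalysisOperator.eq_comp_iff {ι : Type*} {f : ι → V →L[R] R} {g : ι → W →L[R] R}
    {θ : V →L[R] lp (fun _ : ι ↦ R) p} {θ' : W →L[R] lp (fun _ : ι ↦ R) p}
    (hθ : IsAnalysisOperator f θ) (hθ' : IsAnalysisOperator g θ') {T : W →L[R] V} :
    θ' = θ.comp T ↔ ∀ i, g i = (f i).comp T := by
  have coeff (x : W) (i : ι) : θ' x i = θ (T x) i ↔ g i x = f i (T x) := by rw [hθ, hθ']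
  simp only [ContinuousLinearMap.ext_iff, ContinuousLinearMap.comp_apply, lp.ext_iff, funext_iff,
    coeff]
  exact forall_comm

theorem IsSynthesisOperator.apply_single [T2Space V] {τ : ℕ → V}
    {σ : lp (fun _ : ℕ ↦ R) p →L[R] V} (hσ : IsSynthesisOperator τ σ) (n : ℕ) :
    σ (lp.single p n 1) = τ n := by
  refine tendsto_nhds_unique (hσ _) (tendsto_atTop_of_eventually_const (i₀ := n + 1) fun N hN ↦ ?_)
  rw [Finset.sum_eq_single_of_mem n (Finset.mem_range.mpr hN)
      fun m _ hm ↦ by rw [lp.single_apply_ne _ _ _ hm, zero_smul],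
    lp.single_apply_self, one_smul]

theorem IsSynthesisOperator.eq_comp_iff [T2Space V] [T2Space W] {τ : ℕ → V} {ω : ℕ → W}
    {σ : lp (fun _ : ℕ ↦ R) p →L[R] V} {σ' : lp (fun _ : ℕ ↦ R) p →L[R] W}
    (hσ : IsSynthesisOperator τ σ) (hσ' : IsSynthesisOperator ω σ') {T : V →L[R] W} :
    σ' = T.comp σ ↔ ∀ n, ω n = T (τ n) := by
  refine ⟨fun h n ↦ ?_, fun h ↦ ContinuousLinearMap.ext fun a ↦ ?_⟩
  · rw [← hσ'.apply_single, ← hσ.apply_single, h, ContinuousLinearMap.comp_apply]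
  · have partialSum_map (N : ℕ) :
        T (∑ n ∈ Finset.range N, a n • τ n) = ∑ n ∈ Finset.range N, a n • ω n := by
      simp only [map_sum, map_smul, h]
    exact tendsto_nhds_unique (hσ' a)
      (((T.continuous.tendsto _).comp (hσ a)).congr partialSum_map)

theorem pASF_similarity_general [T2Space V] [T2Space W]
    {f : ℕ → V →L[R] R} {g : ℕ → W →L[R] R} {τ : ℕ → V} {ω : ℕ → W}
    {θf : V →L[R] lp (fun _ : ℕ ↦ R) p} {θg : W →L[R] lp (fun _ : ℕ ↦ R) p}
    {θτ : lp (fun _ : ℕ ↦ R) p →L[R] V} {θω : lp (fun _ : ℕ ↦ R) p →L[R] W}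
    {Sf : V ≃L[R] V} {Sg : W ≃L[R] W}
    (hf : IsApproxSchauderFrame f τ θf θτ Sf) (hg : IsApproxSchauderFrame g ω θg θω Sg) :
    ((∃ (T₁ : W ≃L[R] V) (T₂ : V ≃L[R] W),
        (∀ n, g n = (f n).comp (T₁ : W →L[R] V)) ∧ (∀ n, ω n = T₂ (τ n))) ↔
      (∃ (T₁ : W ≃L[R] V) (T₂ : V ≃L[R] W),
        θg = θf.comp (T₁ : W →L[R] V) ∧ θω = (T₂ : V →L[R] W).comp θτ)) ∧
    ((∃ (T₁ : W ≃L[R] V) (T₂ : V ≃L[R] W),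
        θg = θf.comp (T₁ : W →L[R] V) ∧ θω = (T₂ : V →L[R] W).comp θτ) ↔
      frameProjection θg θω Sg = frameProjection θf θτ Sf) ∧
    (∀ (T₁ : W ≃L[R] V) (T₂ : V ≃L[R] W),
      (((∀ n, g n = (f n).comp (T₁ : W →L[R] V)) ∧ (∀ n, ω n = T₂ (τ n))) ∨
        (θg = θf.comp (T₁ : W →L[R] V) ∧ θω = (T₂ : V →L[R] W).comp θτ)) →
        ((T₁ : W →L[R] V) = (Sf.symm : V →L[R] V).comp (θτ.comp θg) ∧
         (T₂ : V →L[R] W) = (θω.comp θf).comp (Sf.symm : V →L[R] V))) ∧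
    ((Sf : V →L[R] V) = .id R V →
      ∀ (T₁ : W ≃L[R] V) (T₂ : V ≃L[R] W),
        (θg = θf.comp (T₁ : W →L[R] V) ∧ θω = (T₂ : V →L[R] W).comp θτ) →
        (((Sg : W →L[R] W) = .id R W ↔
            (T₂ : V →L[R] W).comp (T₁ : W →L[R] V) = .id R W) ∧
         ((Sg : W →L[R] W) = .id R W ↔
            (T₁ : W →L[R] V).comp (T₂ : V →L[R] W) = .id R V))) := by
  have hS := hf.frameOperator_eq
  have hS' := hg.frameOperator_eq
  have similar_iff (T₁ : W ≃L[R] V) (T₂ : V ≃L[R] W) :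
      ((∀ n, g n = (f n).comp (T₁ : W →L[R] V)) ∧ (∀ n, ω n = T₂ (τ n))) ↔
        (θg = θf.comp (T₁ : W →L[R] V) ∧ θω = (T₂ : V →L[R] W).comp θτ) :=
    and_congr (hf.analysis.eq_comp_iff hg.analysis).symm
      (hf.synthesis.eq_comp_iff hg.synthesis (T := T₂)).symm
  refine ⟨exists_congr fun T₁ ↦ exists_congr (similar_iff T₁),
    exists_eq_comp_iff_frameProjection_eq hS hS', fun T₁ T₂ h ↦ ?_, fun hId T₁ T₂ ⟨hT₁, hT₂⟩ ↦ ?_⟩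
  · obtain ⟨hT₁, hT₂⟩ := h.elim (similar_iff T₁ T₂).mp id
    exact ⟨eq_symm_comp_of_analysis_eq_comp hS hT₁, eq_comp_symm_of_synthesis_eq_comp hS hT₂⟩
  · have hSg : (Sg : W →L[R] W) = (T₂ : V →L[R] W).comp (T₁ : W →L[R] V) := by
      rw [frameOperator_eq_comp hS hS' hT₁ hT₂, hId, ContinuousLinearMap.id_comp]
    rw [hSg]
    exact ⟨Iff.rfl, comp_eq_id_iff_comp_eq_id T₁ T₂⟩

end Coefficients

/-- **Similarity of p-ASFs.** For two p-ASFs `((f_n),(τ_n))` and `((g_n),(ω_n))` for `X`, with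
analysis/synthesis operators `θf, θτ, θg, θω` and frame operators `Sf, Sg`, the following are
equivalent: (i) there are bounded invertible `T₁, T₂` with `g_n = f_n ∘ T₁`, `ω_n = T₂ τ_n`;
(ii) there are bounded invertible `T₁, T₂` with `θg = θf ∘ T₁`, `θω = T₂ ∘ θτ`;
(iii) `P_{g,ω} = P_{f,τ}` where `P_{f,τ} = θf ∘ Sf⁻¹ ∘ θτ`.  If these hold the operators are
unique, given by `T₁ = Sf⁻¹ θτ θg` and `T₂ = θω θf Sf⁻¹`; and if `Sf = I` then `Sg = I` iff
`T₂ T₁ = I` iff `T₁ T₂ = I`. -/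
theorem pASF_similarity (p : ℝ≥0∞) [Fact (1 ≤ p)] (hp : p ≠ ⊤)
    (f g : ℕ → X →L[𝕂] 𝕂) (τ ω : ℕ → X)
    (θf θg : X →L[𝕂] lp (fun _ : ℕ => 𝕂) p) (θτ θω : lp (fun _ : ℕ => 𝕂) p →L[𝕂] X)
    (Sf Sg : X ≃L[𝕂] X)
    (hθf : ∀ (x : X) (n : ℕ), θf x n = f n x)
    (hθg : ∀ (x : X) (n : ℕ), θg x n = g n x)
    (hθτ : ∀ a : lp (fun _ : ℕ => 𝕂) p,
      Tendsto (fun N => ∑ n ∈ Finset.range N, a n • τ n) atTop (nhds (θτ a)))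
    (hθω : ∀ a : lp (fun _ : ℕ => 𝕂) p,
      Tendsto (fun N => ∑ n ∈ Finset.range N, a n • ω n) atTop (nhds (θω a)))
    (hSf : (Sf : X →L[𝕂] X) = θτ.comp θf)
    (hSg : (Sg : X →L[𝕂] X) = θω.comp θg) :
    ((∃ T₁ T₂ : X ≃L[𝕂] X,
        (∀ n, g n = (f n).comp (T₁ : X →L[𝕂] X)) ∧ (∀ n, ω n = T₂ (τ n))) ↔
      (∃ T₁ T₂ : X ≃L[𝕂] X,
        θg = θf.comp (T₁ : X →L[𝕂] X) ∧ θω = (T₂ : X →L[𝕂] X).comp θτ)) ∧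
    ((∃ T₁ T₂ : X ≃L[𝕂] X,
        θg = θf.comp (T₁ : X →L[𝕂] X) ∧ θω = (T₂ : X →L[𝕂] X).comp θτ) ↔
      θg.comp ((Sg.symm : X →L[𝕂] X).comp θω) =
        θf.comp ((Sf.symm : X →L[𝕂] X).comp θτ)) ∧
    (∀ T₁ T₂ : X ≃L[𝕂] X,
      (((∀ n, g n = (f n).comp (T₁ : X →L[𝕂] X)) ∧ (∀ n, ω n = T₂ (τ n))) ∨
        (θg = θf.comp (T₁ : X →L[𝕂] X) ∧ θω = (T₂ : X →L[𝕂] X).comp θτ)) →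
        ((T₁ : X →L[𝕂] X) = (Sf.symm : X →L[𝕂] X).comp (θτ.comp θg) ∧
         (T₂ : X →L[𝕂] X) = (θω.comp θf).comp (Sf.symm : X →L[𝕂] X))) ∧
    ((Sf : X →L[𝕂] X) = ContinuousLinearMap.id 𝕂 X →
      ∀ T₁ T₂ : X ≃L[𝕂] X,
        (θg = θf.comp (T₁ : X →L[𝕂] X) ∧ θω = (T₂ : X →L[𝕂] X).comp θτ) →
        (((Sg : X →L[𝕂] X) = ContinuousLinearMap.id 𝕂 X ↔
            (T₂ : X →L[𝕂] X).comp (T₁ : X →L[𝕂] X) = ContinuousLinearMap.id 𝕂 X) ∧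
         ((Sg : X →L[𝕂] X) = ContinuousLinearMap.id 𝕂 X ↔
            (T₁ : X →L[𝕂] X).comp (T₂ : X →L[𝕂] X) = ContinuousLinearMap.id 𝕂 X))) :=
  pASF_similarity_general ⟨hθf, hθτ, hSf⟩ ⟨hθg, hθω, hSg⟩
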